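/- (i) For every w∈W^J and x∈ℝ^n: (Y_J(w)·x)(0)=0, (Y_J(w)·x)'(0)=x, L(Y_J(w)·x)=0∈F, and for every k∈K∖J, (Y_J(w)·x)(t)=0 for all t∈[−r,−d_k(w)]. (ii) For all w∈W^J, w̃∈F, and x∈ℝ^n: ((DY_J(w)w̃)·x)(0)=0, ((DY_J(w)w̃)·x)'(0)=0, and L((DY_J(w)w̃)·x)=0. (iii) For every w∈W^J, dim(Y_J(w)·ℝ^n)=n and C^1_n = X_0 ⊕ Y_J(w)·ℝ^n. (iv) For every φ∈U_J and x∈ℝ^n: φ + Y_J(Lφ)·x ∈ U_J and f(φ + Y_J(Lφ)·x) = f(φ). -/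

import Mathlib

open Set

noncomputable section

/-- The compact interval `[-r,0]`. -/
abbrev Icc0 (r : ℝ) : Set ℝ := Set.Icc (-r) 0

/-- Extension of a continuous map on `[-r,0]` to `ℝ`, by the value `0` outside. -/
def extFun {r : ℝ} {E : Type*} [TopologicalSpace E] [Zero E] (φ : C(Icc0 r, E)) : ℝ → E :=
  fun t => if h : t ∈ Icc0 r then φ ⟨t, h⟩ else 0

section extlemmas

variable {r : ℝ} {E : Type*} [NormedAddCommGroup E] [NormedSpace ℝ E]

lemma extFun_add (φ ψ : C(Icc0 r, E)) : extFun (φ + ψ) = extFun φ + extFun ψ := by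
  funext t; by_cases h : t ∈ Icc0 r <;> simp [extFun, h]

lemma extFun_zero : extFun (0 : C(Icc0 r, E)) = 0 := by
  funext t; by_cases h : t ∈ Icc0 r <;> simp [extFun, h]

lemma extFun_smul (c : ℝ) (φ : C(Icc0 r, E)) : extFun (c • φ) = c • extFun φ := by
  funext t; by_cases h : t ∈ Icc0 r <;> simp [extFun, h]

end extlemmas

/-- The space `C¹([-r,0],E)`, realized as the closed subspace of pairs `(φ, φ')` in
`C([-r,0],E) × C([-r,0],E)` such that `φ` is differentiable on `[-r,0]` with derivative `φ'`. -/
def C1sub (r : ℝ) (E : Type*) [NormedAddCommGroup E] [NormedSpace ℝ E] :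
    Submodule ℝ (C(Icc0 r, E) × C(Icc0 r, E)) where
  carrier := {p | ∀ t ∈ Icc0 r, HasDerivWithinAt (extFun p.1) (extFun p.2 t) (Icc0 r) t}
  add_mem' := by
    intro p q hp hq t ht
    have h := (hp t ht).add (hq t ht)
    have e1 : extFun (p + q).1 = fun s => extFun p.1 s + extFun q.1 s := by
      simp [Prod.fst_add, extFun_add]; rfl
    have e2 : extFun (p + q).2 t = extFun p.2 t + extFun q.2 t := by
      simp [Prod.snd_add, extFun_add]
    rw [e1, e2]; exact h
  zero_mem' := by
    intro t ht
    have e1 : extFun (0 : C(Icc0 r, E) × C(Icc0 r, E)).1 = fun _ : ℝ => (0 : E) := by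
      simp [extFun_zero]; rfl
    have e2 : extFun (0 : C(Icc0 r, E) × C(Icc0 r, E)).2 t = 0 := by
      simp [extFun_zero]
    rw [e1, e2]; exact hasDerivWithinAt_const _ _ _
  smul_mem' := by
    intro c p hp t ht
    have h := (hp t ht).const_smul c
    have e1 : extFun (c • p).1 = fun s => c • extFun p.1 s := by
      simp [Prod.smul_fst, extFun_smul]; rfl
    have e2 : extFun (c • p).2 t = c • extFun p.2 t := by
      simp [Prod.smul_snd, extFun_smul]
    rw [e1, e2]; exact h

/-- The Banach space `C¹([-r,0],E)`. -/
abbrev C1 (r : ℝ) (E : Type*) [NormedAddCommGroup E] [NormedSpace ℝ E] := ↥(C1sub r E)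

section C1ops

variable {r : ℝ} {E : Type*} [NormedAddCommGroup E] [NormedSpace ℝ E]

/-- Evaluation `φ(t)` of `φ ∈ C¹([-r,0],E)` (extended by `0` outside `[-r,0]`). -/
def evC (φ : C1 r E) (t : ℝ) : E := extFun φ.1.1 t

/-- Evaluation `φ'(t)` of the derivative of `φ ∈ C¹([-r,0],E)`. -/
def dvC (φ : C1 r E) (t : ℝ) : E := extFun φ.1.2 t

end C1ops

/-- The continuous linear map `ℝ → (Fin n → ℝ)` sending `x` to the vector `x·e_ν`. -/
def sCLM (n : ℕ) (ν : Fin n) : ℝ →L[ℝ] (Fin n → ℝ) :=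
  ContinuousLinearMap.pi (fun j => if j = ν then ContinuousLinearMap.id ℝ ℝ else 0)

/-- `ψ · e_ν` for a continuous map `ψ`. -/
def CMsingle {r : ℝ} {n : ℕ} (ν : Fin n) (φ : C(Icc0 r, ℝ)) : C(Icc0 r, Fin n → ℝ) :=
  ⟨fun t => sCLM n ν (φ t), (sCLM n ν).continuous.comp φ.continuous⟩

lemma extFun_CMsingle {r : ℝ} {n : ℕ} (ν : Fin n) (φ : C(Icc0 r, ℝ)) (t : ℝ) :
    extFun (CMsingle ν φ) t = sCLM n ν (extFun φ t) := by
  by_cases h : t ∈ Icc0 r <;> simp [extFun, CMsingle, h]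

/-- `ψ · e_ν ∈ C¹([-r,0],ℝⁿ)` for a scalar function `ψ ∈ C¹([-r,0],ℝ)`. -/
def singleC1 {r : ℝ} {n : ℕ} (ν : Fin n) (φ : C1 r ℝ) : C1 r (Fin n → ℝ) :=
  ⟨(CMsingle ν φ.1.1, CMsingle ν φ.1.2), by
    intro t ht
    have h := ((sCLM n ν).hasFDerivAt).comp_hasDerivWithinAt t (φ.2 t ht)
    have e1 : extFun (CMsingle ν φ.1.1) = (sCLM n ν) ∘ (extFun φ.1.1) := by
      funext s; exact extFun_CMsingle ν φ.1.1 s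
    rw [show (CMsingle ν φ.1.1, CMsingle ν φ.1.2).1 = CMsingle ν φ.1.1 from rfl,
      show (CMsingle ν φ.1.1, CMsingle ν φ.1.2).2 = CMsingle ν φ.1.2 from rfl,
      e1, extFun_CMsingle]
    exact h⟩

/-- The linear map `ℝⁿ → C¹([-r,0],ℝⁿ)`, `x ↦ Σ_ν x_ν ψ_ν · e_ν` (the map `Y·x`). -/
def Ymap {r : ℝ} {n : ℕ} (ψ : Fin n → C1 r ℝ) : (Fin n → ℝ) →ₗ[ℝ] C1 r (Fin n → ℝ) where
  toFun x := ∑ ν, x ν • singleC1 ν (ψ ν)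
  map_add' x y := by simp [add_smul, Finset.sum_add_distrib]
  map_smul' c x := by simp [smul_smul, Finset.smul_sum]

/-- The closed subspace `X₀ = {φ ∈ C¹ : φ'(0) = 0}`. -/
def X0sub (r : ℝ) (n : ℕ) : Submodule ℝ (C1 r (Fin n → ℝ)) where
  carrier := {φ | dvC φ 0 = 0}
  add_mem' := by
    intro φ ψ hφ hψ
    have : dvC (φ + ψ) 0 = dvC φ 0 + dvC ψ 0 := by
      simp [dvC, extFun_add]
    rw [Set.mem_setOf_eq] at *
    rw [this, hφ, hψ, add_zero]
  zero_mem' := by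
    show dvC (0 : C1 r (Fin n → ℝ)) 0 = 0
    simp [dvC, extFun_zero]
  smul_mem' := by
    intro c φ hφ
    have : dvC (c • φ) 0 = c • dvC φ 0 := by simp [dvC, extFun_smul]
    rw [Set.mem_setOf_eq] at *
    rw [this, hφ, smul_zero]

/-- The projection-like map `R φ = φ − Y·φ'(0)`. -/
def RKmap {r : ℝ} {n : ℕ} (ψ : Fin n → C1 r ℝ) (φ : C1 r (Fin n → ℝ)) : C1 r (Fin n → ℝ) :=
  φ - Ymap ψ (dvC φ 0)

section diffeos

variable {E : Type*} [NormedAddCommGroup E] [NormedSpace ℝ E]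
variable {E' : Type*} [NormedAddCommGroup E'] [NormedSpace ℝ E']

/-- `f` defines a `C¹`-diffeomorphism from `s` onto `t`: `f` is continuously differentiable
on `s`, injective on `s`, maps `s` onto `t`, and has a continuously differentiable inverse. -/
def IsC1DiffeoOn (f : E → E') (s : Set E) (t : Set E') : Prop :=
  ContDiffOn ℝ 1 f s ∧ Set.InjOn f s ∧ f '' s = t ∧
    ∃ g : E' → E, ContDiffOn ℝ 1 g t ∧ Set.InvOn g f s t

/-- The tangent cone of `X ⊆ E` at `x`: all velocities `c'(0)` of continuously differentiable
curves in `X` through `x`. -/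
def tangentSet (X : Set E) (x : E) : Set E :=
  {v | ∃ (c : ℝ → E) (ε : ℝ), 0 < ε ∧ ContDiffOn ℝ 1 c (Set.Ioo (-ε) ε) ∧
      (∀ s ∈ Set.Ioo (-ε) ε, c s ∈ X) ∧ c 0 = x ∧ HasDerivWithinAt c v (Set.Ioo (-ε) ε) 0}

/-- `X` is a continuously differentiable submanifold of codimension `m` of `E`. -/
def IsC1SubmanifoldCodim (X : Set E) (m : ℕ) : Prop :=
  ∀ x ∈ X, ∃ (O : Set E) (Φ : E → E) (H Q : Submodule ℝ E),
    IsOpen O ∧ x ∈ O ∧ IsClosed (H : Set E) ∧ IsCompl H Q ∧ Module.finrank ℝ Q = m ∧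
    IsOpen (Φ '' O) ∧ IsC1DiffeoOn Φ O (Φ '' O) ∧ Φ '' (X ∩ O) = (H : Set E) ∩ (Φ '' O)

/-- `X` is a continuously differentiable submanifold of `E`. -/
def IsC1Submanifold (X : Set E) : Prop :=
  ∀ x ∈ X, ∃ (O : Set E) (Φ : E → E) (H : Submodule ℝ E),
    IsOpen O ∧ x ∈ O ∧ IsClosed (H : Set E) ∧
    IsOpen (Φ '' O) ∧ IsC1DiffeoOn Φ O (Φ '' O) ∧ Φ '' (X ∩ O) = (H : Set E) ∩ (Φ '' O)

/-- `A` is an almost graph over `H`. -/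
def IsAlmostGraphOver (A : Set E) (H : Set E) : Prop :=
  ∃ (dm : Set E) (α : E → E), dm ⊆ H ∧ ContDiffOn ℝ 1 α dm ∧
    (∀ ζ ∈ dm ∩ A, α ζ = 0) ∧ (∀ ζ ∈ dm \ A, α ζ ∉ H) ∧
    IsC1DiffeoOn (fun ζ => ζ + α ζ) dm A

end diffeos

/-- The data of the delay differential system
`x'(t) = g(x(t-d_1(Lx_t)),…,x(t-d_kk(Lx_t)))`. -/
structure Setting (r : ℝ) (n kk : ℕ) (F : Type*) [NormedAddCommGroup F] [NormedSpace ℝ F] where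
  /-- The continuous linear map `L : C([-r,0],ℝⁿ) → F`. -/
  L : C(Icc0 r, Fin n → ℝ) →L[ℝ] F
  /-- The open set `W ⊆ F`. -/
  W : Set F
  Wopen : IsOpen W
  /-- The delay functions `d_k : W → [0,r]`. -/
  d : Fin kk → F → ℝ
  d_smooth : ∀ k, ContDiffOn ℝ 1 (d k) W
  d_mem : ∀ k, ∀ w ∈ W, d k w ∈ Set.Icc (0:ℝ) r
  /-- The open set `V ⊆ (ℝⁿ)^kk`. -/
  V : Set (Fin kk → Fin n → ℝ)
  Vopen : IsOpen V
  /-- The right hand side function `g : V → ℝⁿ`. -/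
  g : (Fin kk → Fin n → ℝ) → Fin n → ℝ
  g_smooth : ContDiffOn ℝ 1 g V

namespace Setting

variable {r : ℝ} {n kk : ℕ} {F : Type*} [NormedAddCommGroup F] [NormedSpace ℝ F]
variable (S : Setting r n kk F)

/-- `L` applied to (the `C⁰`-part of) `φ ∈ C¹`. -/
def Lof (φ : C1 r (Fin n → ℝ)) : F := S.L φ.1.1

/-- `φ̂ = (φ(-d_1(Lφ)),…,φ(-d_kk(Lφ)))`. -/
def hat (φ : C1 r (Fin n → ℝ)) : Fin kk → Fin n → ℝ := fun k => evC φ (-(S.d k (S.Lof φ)))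

/-- The domain `U = {φ ∈ C¹ : Lφ ∈ W, φ̂ ∈ V}`. -/
def U : Set (C1 r (Fin n → ℝ)) := {φ | S.Lof φ ∈ S.W ∧ S.hat φ ∈ S.V}

/-- The right hand side `f(φ) = g(φ̂)`. -/
def fmap (φ : C1 r (Fin n → ℝ)) : Fin n → ℝ := S.g (S.hat φ)

/-- The solution manifold `X_f = {φ ∈ U : φ'(0) = f(φ)}`. -/
def Xf : Set (C1 r (Fin n → ℝ)) := {φ | φ ∈ S.U ∧ dvC φ 0 = S.fmap φ}

/-- `W_J = {w ∈ W : d_j(w)=0 for j∈J, d_k(w)>0 for k∉J}`. -/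
def WJ (J : Finset (Fin kk)) : Set F :=
  {w | w ∈ S.W ∧ (∀ j ∈ J, S.d j w = 0) ∧ ∀ k ∉ J, 0 < S.d k w}

/-- `W^J = {w ∈ W : d_k(w)>0 for k∉J}`. -/
def WupJ (J : Finset (Fin kk)) : Set F :=
  {w | w ∈ S.W ∧ ∀ k ∉ J, 0 < S.d k w}

/-- `U_J = U ∩ L⁻¹(W_J)`. -/
def UJ (J : Finset (Fin kk)) : Set (C1 r (Fin n → ℝ)) := {φ | φ ∈ S.U ∧ S.Lof φ ∈ S.WJ J}

/-- `U^J = U ∩ L⁻¹(W^J)`. -/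
def UupJ (J : Finset (Fin kk)) : Set (C1 r (Fin n → ℝ)) := {φ | φ ∈ S.U ∧ S.Lof φ ∈ S.WupJ J}

/-- `X_{fJ} = X_f ∩ U_J`. -/
def XfJ (J : Finset (Fin kk)) : Set (C1 r (Fin n → ℝ)) := S.Xf ∩ S.UJ J

/-- Hypothesis (b): `g` is bounded. -/
def HypB : Prop := ∃ M, ∀ v ∈ S.V, ‖S.g v‖ ≤ M

/-- Hypothesis (d1b): `d₁ = 0` on `W` and `g` is bounded on subsets of `V` with bounded
first component. -/
def HypD1B (hk : 0 < kk) : Prop :=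
  (∀ w ∈ S.W, S.d ⟨0, hk⟩ w = 0) ∧
  ∀ B : Set (Fin n → ℝ), Bornology.IsBounded B →
    Bornology.IsBounded (S.g '' {v | v ∈ S.V ∧ v ⟨0, hk⟩ ∈ B})

/-- The partial derivative `∂_{(k-1)n+ν} g_μ (φ̂)`. -/
def dgCoeff (φ : C1 r (Fin n → ℝ)) (k : Fin kk) (ν : Fin n) (μ : Fin n) : ℝ :=
  fderivWithin ℝ S.g S.V (S.hat φ) (Pi.single k (Pi.single ν 1)) μ

/-- The right hand side of the formula for `Df_μ(φ)χ`. -/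
def dFormula (φ χ : C1 r (Fin n → ℝ)) (μ : Fin n) : ℝ :=
  ∑ k, ∑ ν, S.dgCoeff φ k ν μ *
    (evC χ (-(S.d k (S.Lof φ))) ν -
      dvC φ (-(S.d k (S.Lof φ))) ν * fderivWithin ℝ (S.d k) S.W (S.Lof φ) (S.Lof χ))

/-- The map `R^J(φ) = φ − Y_J(Lφ)·φ'(0)` of Section 4 of the paper. -/
def RJmap (y : Fin n → F → C1 r ℝ) (φ : C1 r (Fin n → ℝ)) : C1 r (Fin n → ℝ) :=
  φ - Ymap (fun ν => y ν (S.Lof φ)) (dvC φ 0)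

end Setting


variable {r : ℝ} {n kk : ℕ} {F : Type*} [NormedAddCommGroup F] [NormedSpace ℝ F]
  [FiniteDimensional ℝ F]

/-!
Everything about `Y · x = ∑ ν, x ν • ψ ν · e_ν` is read off from the continuous linear maps
`φ ↦ φ(t)`, `φ ↦ φ'(0)` and `φ ↦ Lφ` on `C¹`. Each of them takes a value on `Y_J(w) · x` which does
not depend on `w` in the open set `W^J`, so it annihilates the derivative of `w ↦ Y_J(w) · x`.
Since `φ ↦ φ'(0)` is a left inverse of `x ↦ Y_J(w) · x`, its kernel `X₀` is complementary to the
range of `Y_J(w)`. Finally, adding `Y_J(Lφ) · x` to `φ` leaves `Lφ`, hence all the delays,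
unchanged, and `Y_J(Lφ) · x` vanishes at every delayed argument: at `-d_j(Lφ) = 0` for `j ∈ J`, and
at `-d_k(Lφ)` for `k ∉ J`.
-/

section LinearAlgebra

variable {R M N : Type*} [Ring R] [AddCommGroup M] [Module R M] [AddCommGroup N] [Module R N]

lemma isCompl_ker_range_of_leftInverse {f : M →ₗ[R] N} {g : N →ₗ[R] M}
    (hfg : Function.LeftInverse f g) : IsCompl (LinearMap.ker f) (LinearMap.range g) := by
  have hidem : IsIdempotentElem (g ∘ₗ f) := LinearMap.ext fun x => congrArg g (hfg (f x))
  have hcompl := (LinearMap.IsIdempotentElem.isCompl hidem).symm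
  rwa [LinearMap.ker_comp_of_ker_eq_bot f (LinearMap.ker_eq_bot.2 hfg.injective),
    LinearMap.range_comp_of_range_eq_top g (LinearMap.range_eq_top.2 hfg.surjective)] at hcompl

end LinearAlgebra

section Calculus

variable {𝕜 A B C : Type*} [NontriviallyNormedField 𝕜] [NormedAddCommGroup A] [NormedSpace 𝕜 A]
  [NormedAddCommGroup B] [NormedSpace 𝕜 B] [NormedAddCommGroup C] [NormedSpace 𝕜 C]

lemma map_fderivWithin_eq_zero_of_eqOn_const (T : B →L[𝕜] C) {h : A → B} {s : Set A} {a : A}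
    {c : C} (hs : UniqueDiffWithinAt 𝕜 s a) (ha : a ∈ s) (hh : DifferentiableWithinAt 𝕜 h s a)
    (hc : ∀ b ∈ s, T (h b) = c) (v : A) : T (fderivWithin 𝕜 h s a v) = 0 := by
  have hcomp := T.hasFDerivAt.comp_hasFDerivWithinAt a hh.hasFDerivWithinAt
  have hconst : HasFDerivWithinAt (T ∘ h) (0 : A →L[𝕜] C) s a :=
    (hasFDerivWithinAt_const c a s).congr hc (hc a ha)
  exact DFunLike.congr_fun (hs.eq hcomp hconst) v

lemma differentiableWithinAt_sum_smul_clm {ι : Type*} [Fintype ι] (T : ι → B →L[𝕜] C) (c : ι → 𝕜)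
    {y : ι → A → B} {s : Set A} {a : A} (hy : ∀ i, DifferentiableWithinAt 𝕜 (y i) s a) :
    DifferentiableWithinAt 𝕜 (fun b => ∑ i, c i • T i (y i b)) s a :=
  .fun_sum fun i _ => ((T i).differentiableAt.comp_differentiableWithinAt a (hy i)).const_smul (c i)

end Calculus

section Evaluation

variable {E : Type*} [NormedAddCommGroup E] [NormedSpace ℝ E]

/-- Evaluation at `t` of the extension by `0`, as a continuous linear map on `C([-r,0],E)`;
it is the zero map when `t ∉ [-r,0]`. -/
def extFunCLM (r : ℝ) (E : Type*) [NormedAddCommGroup E] [NormedSpace ℝ E] (t : ℝ) :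
    C(Icc0 r, E) →L[ℝ] E where
  toFun φ := extFun φ t
  map_add' φ χ := congrFun (extFun_add φ χ) t
  map_smul' c φ := congrFun (extFun_smul c φ) t
  cont := by
    by_cases ht : t ∈ Icc0 r
    · simpa only [extFun, ht, dite_true] using continuous_eval_const (⟨t, ht⟩ : Icc0 r)
    · simpa only [extFun, ht, dite_false] using continuous_const

/-- The evaluation `φ ↦ φ(t)` as a continuous linear map on `C¹([-r,0],E)`. -/
def evCLM (r : ℝ) (E : Type*) [NormedAddCommGroup E] [NormedSpace ℝ E] (t : ℝ) :
    C1 r E →L[ℝ] E :=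
  extFunCLM r E t ∘L .fst ℝ _ _ ∘L (C1sub r E).subtypeL

/-- The evaluation of the derivative `φ ↦ φ'(t)` as a continuous linear map on `C¹([-r,0],E)`. -/
def dvCLM (r : ℝ) (E : Type*) [NormedAddCommGroup E] [NormedSpace ℝ E] (t : ℝ) :
    C1 r E →L[ℝ] E :=
  extFunCLM r E t ∘L .snd ℝ _ _ ∘L (C1sub r E).subtypeL

lemma evCLM_apply (t : ℝ) (φ : C1 r E) : evCLM r E t φ = evC φ t := rfl

lemma dvCLM_apply (t : ℝ) (φ : C1 r E) : dvCLM r E t φ = dvC φ t := rfl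

lemma evC_add (φ χ : C1 r E) (t : ℝ) : evC (φ + χ) t = evC φ t + evC χ t :=
  map_add (evCLM r E t) φ χ

end Evaluation

lemma X0sub_eq_ker_dvCLM : X0sub r n = LinearMap.ker (dvCLM r (Fin n → ℝ) 0).toLinearMap := rfl

section SingleComponent

lemma sCLM_apply (ν : Fin n) (a : ℝ) : sCLM n ν a = Pi.single ν a := by
  ext j
  by_cases hj : j = ν <;> simp [sCLM, hj]

lemma evC_singleC1 (ν : Fin n) (φ : C1 r ℝ) (t : ℝ) :
    evC (singleC1 ν φ) t = Pi.single ν (evC φ t) :=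
  (extFun_CMsingle ν φ.1.1 t).trans (sCLM_apply ν _)

lemma dvC_singleC1 (ν : Fin n) (φ : C1 r ℝ) (t : ℝ) :
    dvC (singleC1 ν φ) t = Pi.single ν (dvC φ t) :=
  (extFun_CMsingle ν φ.1.2 t).trans (sCLM_apply ν _)

/-- The map `ψ ↦ ψ · e_ν` as a continuous linear map from `C¹([-r,0],ℝ)` to `C¹([-r,0],ℝⁿ)`. -/
def singleC1CLM (r : ℝ) (ν : Fin n) : C1 r ℝ →L[ℝ] C1 r (Fin n → ℝ) :=
  ((((sCLM n ν).compLeftContinuous ℝ (Icc0 r)).prodMap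
      ((sCLM n ν).compLeftContinuous ℝ (Icc0 r))).comp (C1sub r ℝ).subtypeL).codRestrict
    (C1sub r (Fin n → ℝ)) fun φ => (singleC1 ν φ).2

end SingleComponent

section Ymap

variable {G : Type*} [NormedAddCommGroup G] [NormedSpace ℝ G]

lemma Ymap_apply (ψ : Fin n → C1 r ℝ) (x : Fin n → ℝ) :
    Ymap ψ x = ∑ ν, x ν • singleC1 ν (ψ ν) := rfl

lemma evC_Ymap (ψ : Fin n → C1 r ℝ) (x : Fin n → ℝ) (t : ℝ) :
    evC (Ymap ψ x) t = fun ν => x ν * evC (ψ ν) t := by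
  rw [← evCLM_apply, Ymap_apply]
  simp only [map_sum, map_smul, evCLM_apply, evC_singleC1, ← Pi.single_smul, smul_eq_mul,
    Finset.univ_sum_single]

lemma dvC_Ymap (ψ : Fin n → C1 r ℝ) (x : Fin n → ℝ) (t : ℝ) :
    dvC (Ymap ψ x) t = fun ν => x ν * dvC (ψ ν) t := by
  rw [← dvCLM_apply, Ymap_apply]
  simp only [map_sum, map_smul, dvCLM_apply, dvC_singleC1, ← Pi.single_smul, smul_eq_mul,
    Finset.univ_sum_single]

lemma evC_Ymap_eq_zero {ψ : Fin n → C1 r ℝ} {t : ℝ} (hψ : ∀ ν, evC (ψ ν) t = 0) (x : Fin n → ℝ) :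
    evC (Ymap ψ x) t = 0 := by
  ext ν
  simp [evC_Ymap, hψ ν]

lemma dvC_Ymap_eq_self {ψ : Fin n → C1 r ℝ} {t : ℝ} (hψ : ∀ ν, dvC (ψ ν) t = 1) (x : Fin n → ℝ) :
    dvC (Ymap ψ x) t = x := by
  ext ν
  simp [dvC_Ymap, hψ ν]

lemma finrank_range_Ymap {ψ : Fin n → C1 r ℝ} {t : ℝ} (hψ : ∀ ν, dvC (ψ ν) t = 1) :
    Module.finrank ℝ (LinearMap.range (Ymap ψ)) = n := by
  have hinv : Function.LeftInverse (dvC · t) (Ymap ψ) := dvC_Ymap_eq_self hψ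
  rw [LinearMap.finrank_range_of_inj hinv.injective, Module.finrank_fin_fun]

lemma isCompl_X0sub_range_Ymap {ψ : Fin n → C1 r ℝ} (hψ : ∀ ν, dvC (ψ ν) 0 = 1) :
    IsCompl (X0sub r n) (LinearMap.range (Ymap ψ)) := by
  rw [X0sub_eq_ker_dvCLM]
  exact isCompl_ker_range_of_leftInverse (dvC_Ymap_eq_self hψ)

lemma differentiableWithinAt_Ymap {y : Fin n → G → C1 r ℝ} {s : Set G} {w : G}
    (hy : ∀ ν, DifferentiableWithinAt ℝ (y ν) s w) (x : Fin n → ℝ) :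
    DifferentiableWithinAt ℝ (fun w' => Ymap (fun ν => y ν w') x) s w := by
  have hsum := differentiableWithinAt_sum_smul_clm (𝕜 := ℝ) (B := C1 r ℝ)
    (C := C1 r (Fin n → ℝ)) (singleC1CLM r) x hy
  exact hsum

lemma map_fderivWithin_Ymap_eq_zero_of_eqOn_const {C : Type*} [NormedAddCommGroup C]
    [NormedSpace ℝ C] (T : C1 r (Fin n → ℝ) →L[ℝ] C) {y : Fin n → G → C1 r ℝ} {s : Set G} {w : G}
    {x : Fin n → ℝ} {c : C} (hs : UniqueDiffWithinAt ℝ s w) (hw : w ∈ s)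
    (hy : ∀ ν, DifferentiableWithinAt ℝ (y ν) s w)
    (hc : ∀ w' ∈ s, T (Ymap (fun ν => y ν w') x) = c) (v : G) :
    T (fderivWithin ℝ (fun w' => Ymap (fun ν => y ν w') x) s w v) = 0 :=
  map_fderivWithin_eq_zero_of_eqOn_const (B := C1 r (Fin n → ℝ)) T hs hw
    (differentiableWithinAt_Ymap hy x) hc v

end Ymap

namespace Setting

variable {G : Type*} [NormedAddCommGroup G] [NormedSpace ℝ G] (S : Setting r n kk G)

lemma isOpen_WupJ (J : Finset (Fin kk)) : IsOpen (S.WupJ J) := by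
  have hW : S.WupJ J = S.W ∩ ⋂ k, ⋂ (_ : k ∉ J), S.W ∩ S.d k ⁻¹' Ioi 0 := by
    ext w
    simp +contextual [WupJ]
  rw [hW]
  exact S.Wopen.inter <| isOpen_iInter_of_finite fun k => isOpen_iInter_of_finite fun _ =>
    (S.d_smooth k).continuousOn.isOpen_inter_preimage S.Wopen isOpen_Ioi

lemma WJ_subset_WupJ (J : Finset (Fin kk)) : S.WJ J ⊆ S.WupJ J :=
  fun _ hw => ⟨hw.1, hw.2.2⟩

/-- The map `φ ↦ Lφ` as a continuous linear map on `C¹([-r,0],ℝⁿ)`. -/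
def LofCLM : C1 r (Fin n → ℝ) →L[ℝ] G :=
  S.L ∘L .fst ℝ _ _ ∘L (C1sub r (Fin n → ℝ)).subtypeL

lemma LofCLM_apply (φ : C1 r (Fin n → ℝ)) : S.LofCLM φ = S.Lof φ := rfl

lemma Lof_add (φ χ : C1 r (Fin n → ℝ)) : S.Lof (φ + χ) = S.Lof φ + S.Lof χ :=
  map_add S.LofCLM φ χ

variable {S}

lemma Lof_Ymap_eq_zero {ψ : Fin n → C1 r ℝ} (hψ : ∀ ν, S.Lof (singleC1 ν (ψ ν)) = 0)
    (x : Fin n → ℝ) : S.Lof (Ymap ψ x) = 0 := by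
  rw [← LofCLM_apply, Ymap_apply]
  simp only [map_sum, map_smul, LofCLM_apply, hψ, smul_zero, Finset.sum_const_zero]

section Perturbation

variable {J : Finset (Fin kk)} {φ χ : C1 r (Fin n → ℝ)}

lemma hat_add_eq_hat (hL : S.Lof χ = 0) (hχ : ∀ k, evC χ (-(S.d k (S.Lof φ))) = 0) :
    S.hat (φ + χ) = S.hat φ := by
  ext1 k
  simp only [hat, Lof_add, hL, add_zero, evC_add, hχ k]

lemma mem_UJ_of_Lof_eq_of_hat_eq (hφ : φ ∈ S.UJ J) (hL : S.Lof χ = S.Lof φ)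
    (hhat : S.hat χ = S.hat φ) : χ ∈ S.UJ J := by
  simpa only [UJ, U, mem_ofPred_eq, hL, hhat] using hφ

lemma add_mem_UJ_and_fmap_add_eq (hφ : φ ∈ S.UJ J) (hL : S.Lof χ = 0) (h0 : evC χ 0 = 0)
    (hχ : ∀ k ∉ J, evC χ (-(S.d k (S.Lof φ))) = 0) :
    φ + χ ∈ S.UJ J ∧ S.fmap (φ + χ) = S.fmap φ := by
  have hdelay : ∀ k, evC χ (-(S.d k (S.Lof φ))) = 0 := fun k => by
    by_cases hk : k ∈ J
    · rw [hφ.2.2.1 k hk, neg_zero, h0]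
    · exact hχ k hk
  have hhat : S.hat (φ + χ) = S.hat φ := hat_add_eq_hat hL hdelay
  exact ⟨mem_UJ_of_Lof_eq_of_hat_eq hφ (by rw [Lof_add, hL, add_zero]) hhat, congrArg S.g hhat⟩

end Perturbation

end Setting

theorem statement10_general {G : Type*} [NormedAddCommGroup G] [NormedSpace ℝ G]
    (S : Setting r n kk G) (J : Finset (Fin kk)) (y : Fin n → G → C1 r ℝ)
    (hy_diff : ∀ ν, DifferentiableOn ℝ (y ν) (S.WupJ J))
    (hy0 : ∀ ν, ∀ w ∈ S.WupJ J, evC (y ν w) 0 = 0)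
    (hy1 : ∀ ν, ∀ w ∈ S.WupJ J, dvC (y ν w) 0 = 1)
    (hyL : ∀ ν, ∀ w ∈ S.WupJ J, S.L (singleC1 ν (y ν w)).1.1 = 0)
    (hyvan : ∀ ν, ∀ w ∈ S.WupJ J, ∀ k ∉ J, ∀ t ∈ Set.Icc (-r) (-(S.d k w)),
      evC (y ν w) t = 0) :
    (∀ w ∈ S.WupJ J, ∀ x : Fin n → ℝ,
      evC (Ymap (fun ν => y ν w) x) 0 = 0 ∧
      dvC (Ymap (fun ν => y ν w) x) 0 = x ∧
      S.Lof (Ymap (fun ν => y ν w) x) = 0 ∧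
      ∀ k ∉ J, ∀ t ∈ Set.Icc (-r) (-(S.d k w)), evC (Ymap (fun ν => y ν w) x) t = 0) ∧
    (∀ w ∈ S.WupJ J, ∀ wt : G, ∀ x : Fin n → ℝ,
      evC (fderivWithin ℝ (fun w' => (Ymap (fun ν => y ν w') x : C1 r (Fin n → ℝ)))
        (S.WupJ J) w wt) 0 = 0 ∧
      dvC (fderivWithin ℝ (fun w' => (Ymap (fun ν => y ν w') x : C1 r (Fin n → ℝ)))
        (S.WupJ J) w wt) 0 = 0 ∧
      S.Lof (fderivWithin ℝ (fun w' => (Ymap (fun ν => y ν w') x : C1 r (Fin n → ℝ)))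
        (S.WupJ J) w wt) = 0) ∧
    (∀ w ∈ S.WupJ J,
      Module.finrank ℝ ↥(LinearMap.range (Ymap (fun ν => y ν w))) = n ∧
      IsCompl (X0sub r n) (LinearMap.range (Ymap (fun ν => y ν w)))) ∧
    (∀ φ ∈ S.UJ J, ∀ x : Fin n → ℝ,
      φ + Ymap (fun ν => y ν (S.Lof φ)) x ∈ S.UJ J ∧
      S.fmap (φ + Ymap (fun ν => y ν (S.Lof φ)) x) = S.fmap φ) := by
  have hev0 w (hw : w ∈ S.WupJ J) x := evC_Ymap_eq_zero (fun ν => hy0 ν w hw) x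
  have hdv0 w (hw : w ∈ S.WupJ J) x := dvC_Ymap_eq_self (fun ν => hy1 ν w hw) x
  have hLof w (hw : w ∈ S.WupJ J) x := S.Lof_Ymap_eq_zero (fun ν => hyL ν w hw) x
  have hvan w (hw : w ∈ S.WupJ J) x k (hk : k ∉ J) t (ht : t ∈ Icc (-r) (-(S.d k w))) :=
    evC_Ymap_eq_zero (fun ν => hyvan ν w hw k hk t ht) x
  refine ⟨fun w hw x => ⟨hev0 w hw x, hdv0 w hw x, hLof w hw x, hvan w hw x⟩,
    fun w hw wt x => ?_,
    fun w hw => ⟨finrank_range_Ymap (hy1 · w hw), isCompl_X0sub_range_Ymap (hy1 · w hw)⟩,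
    fun φ hφ x => ?_⟩
  · have hunique := (S.isOpen_WupJ J).uniqueDiffWithinAt (𝕜 := ℝ) hw
    have hdiff ν := hy_diff ν w hw
    exact ⟨map_fderivWithin_Ymap_eq_zero_of_eqOn_const (evCLM r (Fin n → ℝ) 0) hunique hw hdiff
        (hev0 · · x) wt,
      map_fderivWithin_Ymap_eq_zero_of_eqOn_const (dvCLM r (Fin n → ℝ) 0) hunique hw hdiff
        (hdv0 · · x) wt,
      map_fderivWithin_Ymap_eq_zero_of_eqOn_const S.LofCLM hunique hw hdiff (hLof · · x) wt⟩
  · have hw : S.Lof φ ∈ S.WupJ J := S.WJ_subset_WupJ J hφ.2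
    exact Setting.add_mem_UJ_and_fmap_add_eq hφ (hLof _ hw x) (hev0 _ hw x) fun k hk =>
      hvan _ hw x k hk _ ⟨neg_le_neg (S.d_mem k _ hw.1).2, le_rfl⟩

/-- Proposition 4.2. -/
theorem statement10 (hr : 0 < r) (S : Setting r n kk F)
    (J : Finset (Fin kk)) (hJ : J ≠ Finset.univ) (hUJ : (S.UJ J).Nonempty)
    (y : Fin n → F → C1 r ℝ)
    (hy_smooth : ∀ ν, ContDiffOn ℝ 1 (y ν) (S.WupJ J))
    (hy0 : ∀ ν, ∀ w ∈ S.WupJ J, evC (y ν w) 0 = 0)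
    (hy1 : ∀ ν, ∀ w ∈ S.WupJ J, dvC (y ν w) 0 = 1)
    (hyL : ∀ ν, ∀ w ∈ S.WupJ J, S.L (singleC1 ν (y ν w)).1.1 = 0)
    (hyvan : ∀ ν, ∀ w ∈ S.WupJ J, ∀ k ∉ J, ∀ t ∈ Set.Icc (-r) (-(S.d k w)),
      evC (y ν w) t = 0) :
    (∀ w ∈ S.WupJ J, ∀ x : Fin n → ℝ,
      evC (Ymap (fun ν => y ν w) x) 0 = 0 ∧
      dvC (Ymap (fun ν => y ν w) x) 0 = x ∧
      S.Lof (Ymap (fun ν => y ν w) x) = 0 ∧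
      ∀ k ∉ J, ∀ t ∈ Set.Icc (-r) (-(S.d k w)), evC (Ymap (fun ν => y ν w) x) t = 0) ∧
    (∀ w ∈ S.WupJ J, ∀ wt : F, ∀ x : Fin n → ℝ,
      evC (fderivWithin ℝ (fun w' => (Ymap (fun ν => y ν w') x : C1 r (Fin n → ℝ)))
        (S.WupJ J) w wt) 0 = 0 ∧
      dvC (fderivWithin ℝ (fun w' => (Ymap (fun ν => y ν w') x : C1 r (Fin n → ℝ)))
        (S.WupJ J) w wt) 0 = 0 ∧
      S.Lof (fderivWithin ℝ (fun w' => (Ymap (fun ν => y ν w') x : C1 r (Fin n → ℝ)))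
        (S.WupJ J) w wt) = 0) ∧
    (∀ w ∈ S.WupJ J,
      Module.finrank ℝ ↥(LinearMap.range (Ymap (fun ν => y ν w))) = n ∧
      IsCompl (X0sub r n) (LinearMap.range (Ymap (fun ν => y ν w)))) ∧
    (∀ φ ∈ S.UJ J, ∀ x : Fin n → ℝ,
      φ + Ymap (fun ν => y ν (S.Lof φ)) x ∈ S.UJ J ∧
      S.fmap (φ + Ymap (fun ν => y ν (S.Lof φ)) x) = S.fmap φ) := by
  exact statement10_general S J y (fun ν => (hy_smooth ν).differentiableOn one_ne_zero)
    hy0 hy1 hyL hyvan
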